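/- Let n ≥ 8 be divisible by 4, let H be a saturated orthogonal array OA(n,n−1,2,2), and let H' be the n×(n−2) design obtained from H by deleting one fixed column. Let X be the n × ((n−2)(n−3)/2) two-level design whose columns are exactly the interaction columns of all (n−2 choose 2) unordered pairs of distinct columns of H'. Then E(s²)(X) = n²(n−5)/((n−1)(n−3)), and X is E(s²)-optimal: E(s²)(X) ≤ E(s²)(Y) for every n × ((n−2)(n−3)/2) balanced two-level design Y. -/

import Mathlib

open Finset

/-- The `E(s²)` value of an `n × m` two-level design `X` (columns indexed by `ι`,
`m = card ι`): the average of the squared off-diagonal entries of `XᵀX`. -/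
noncomputable def Es2 {n : ℕ} {ι : Type} [Fintype ι] [DecidableEq ι]
    (X : Fin n → ι → ℚ) : ℚ :=
  (∑ i : ι, ∑ j : ι, if i ≠ j then (∑ r : Fin n, X r i * X r j) ^ 2 else 0) /
    ((Fintype.card ι : ℚ) * ((Fintype.card ι : ℚ) - 1))

lemma gram_swap {n : ℕ} {ι : Type} [Fintype ι] (Z : Fin n → ι → ℚ) :
    ∑ i, ∑ j, (∑ r, Z r i * Z r j) ^ 2 = ∑ r, ∑ s, (∑ i, Z r i * Z s i) ^ 2 := by
  have e1 : ∀ i j, (∑ r, Z r i * Z r j) ^ 2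
      = ∑ r, ∑ s, Z r i * Z r j * (Z s i * Z s j) := by
    intro i j
    rw [sq, Finset.sum_mul_sum]
  have e2 : ∀ r s, (∑ i, Z r i * Z s i) ^ 2
      = ∑ i, ∑ j, Z r i * Z r j * (Z s i * Z s j) := by
    intro r s
    rw [sq, Finset.sum_mul_sum]
    refine Finset.sum_congr rfl fun i _ => Finset.sum_congr rfl fun j _ => by ring
  simp only [e1, e2]
  calc _ = ∑ i, ∑ r, ∑ j, ∑ s, Z r i * Z r j * (Z s i * Z s j) :=
        Finset.sum_congr rfl fun i _ => Finset.sum_comm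
    _ = ∑ r, ∑ i, ∑ j, ∑ s, Z r i * Z r j * (Z s i * Z s j) := Finset.sum_comm
    _ = ∑ r, ∑ i, ∑ s, ∑ j, Z r i * Z r j * (Z s i * Z s j) :=
        Finset.sum_congr rfl fun r _ => Finset.sum_congr rfl fun i _ => Finset.sum_comm
    _ = _ := Finset.sum_congr rfl fun r _ => Finset.sum_comm

lemma off_diag {α : Type} [Fintype α] [DecidableEq α] (f : α → α → ℚ) :
    ∑ i, ∑ j, (if i ≠ j then f i j else 0) = ∑ i, ∑ j, f i j - ∑ i, f i i := by
  rw [← Finset.sum_sub_distrib]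
  refine Finset.sum_congr rfl fun i _ => ?_
  have : f i i = ∑ j, if i = j then f i j else 0 := by simp
  rw [this, ← Finset.sum_sub_distrib]
  refine Finset.sum_congr rfl fun j _ => ?_
  by_cases h : i = j <;> simp [h]

lemma key {n : ℕ} {ι : Type} [Fintype ι] [DecidableEq ι] (Z : Fin n → ι → ℚ)
    (hpm : ∀ r i, Z r i = 1 ∨ Z r i = -1) (hb : ∀ i, ∑ r, Z r i = 0) (c : ℚ) :
    (∑ i : ι, ∑ j : ι, if i ≠ j then (∑ r : Fin n, Z r i * Z r j) ^ 2 else 0)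
    = (∑ r, ∑ s, if r ≠ s then (∑ i, Z r i * Z s i + c) ^ 2 else 0)
      - n ^ 2 * c ^ 2 + n * (Fintype.card ι + c) ^ 2 - n ^ 2 * Fintype.card ι := by
  have h1 : ∀ r i, Z r i * Z r i = 1 := by
    intro r i; rcases hpm r i with h | h <;> simp [h]
  have h0 : ∑ r, ∑ s, ∑ i, Z r i * Z s i = 0 := by
    refine Finset.sum_eq_zero fun r _ => ?_
    rw [Finset.sum_comm]
    refine Finset.sum_eq_zero fun i _ => ?_
    rw [← Finset.mul_sum, hb, mul_zero]
  rw [off_diag, off_diag, gram_swap]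
  simp only [add_sq, h1, Finset.sum_add_distrib, ← Finset.mul_sum, ← Finset.sum_mul, h0]
  simp
  ring

lemma pair_sum {α : Type} [Fintype α] [LinearOrder α] (f : α → ℚ) :
    2 * ∑ p : {p : α × α // p.1 < p.2}, f p.1.1 * f p.1.2 = (∑ a, f a) ^ 2 - ∑ a, f a * f a := by
  have e : ∑ p : {p : α × α // p.1 < p.2}, f p.1.1 * f p.1.2
      = ∑ a, ∑ b, if a < b then f a * f b else 0 := by
    rw [← Finset.sum_product', ← Finset.sum_filter]
    rw [Finset.sum_subtype (p := fun p : α × α => p.1 < p.2)]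
    simp
  have e' : ∑ a, ∑ b, (if a < b then f a * f b else 0)
      = ∑ a, ∑ b, if b < a then f a * f b else 0 := by
    rw [Finset.sum_comm]
    refine Finset.sum_congr rfl fun i _ => Finset.sum_congr rfl fun j _ => by
      rw [mul_comm]
  rw [sq, Finset.sum_mul_sum, ← off_diag (fun a b => f a * f b), two_mul, e]
  conv_lhs => rw [e']
  conv_lhs => arg 1; rw [← e']
  rw [← Finset.sum_add_distrib]
  refine Finset.sum_congr rfl fun i _ => ?_
  rw [← Finset.sum_add_distrib]
  refine Finset.sum_congr rfl fun j _ => ?_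
  rcases lt_trichotomy i j with h | h | h
  · simp [h, h.ne, h.not_gt]
  · simp [h]
  · simp [h, h.ne', h.not_gt]

lemma row_orth (n : ℕ) (hn : 8 ≤ n)
    (H : Fin n → Fin (n - 1) → ℚ)
    (hpm : ∀ i j, H i j = 1 ∨ H i j = -1)
    (hbal : ∀ j, ∑ i : Fin n, H i j = 0)
    (horth : ∀ j k : Fin (n - 1), j ≠ k → ∑ i : Fin n, H i j * H i k = 0)
    (r s : Fin n) (hrs : r ≠ s) : ∑ j, H r j * H s j = -1 := by
  have hn0 : (n : ℚ) ≠ 0 := by positivity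
  let A : Matrix (Fin n) (Option (Fin (n - 1))) ℚ := Matrix.of fun i o => o.elim 1 (H i)
  have h1 : ∀ r i, H r i * H r i = 1 := by
    intro r i; rcases hpm r i with h | h <;> simp [h]
  have h : ((n : ℚ)⁻¹ • A.transpose) * A = 1 := by
    ext a b
    rw [Matrix.smul_mul, Matrix.smul_apply, Matrix.mul_apply, Matrix.one_apply]
    rcases a with _ | a <;> rcases b with _ | b
    · simp [A, Matrix.transpose_apply, hn0]
    · simp [A, Matrix.transpose_apply, hbal]
    · simp [A, Matrix.transpose_apply, hbal]
    · by_cases hab : a = b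
      · subst hab; simp [A, Matrix.transpose_apply, h1, hn0]
      · simp [A, Matrix.transpose_apply, horth a b hab, hab]
  have hc : Fintype.card (Option (Fin (n - 1))) = Fintype.card (Fin n) := by
    simp; omega
  have h' := (Matrix.mul_eq_one_comm_of_card_eq (Fin n) (Option (Fin (n - 1))) ℚ hc.symm).2 h
  have h2 := congrFun (congrFun h' r) s
  rw [Matrix.mul_smul, Matrix.smul_apply, Matrix.mul_apply, Matrix.one_apply, if_neg hrs,
    smul_eq_mul] at h2
  have h3 := (mul_eq_zero.1 h2).resolve_left (inv_ne_zero hn0)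
  simp [A] at h3
  linarith

lemma parity {ι : Type} [Fintype ι] (f : ι → ℚ) (hf : ∀ i, f i = 1 ∨ f i = -1) :
    ∃ k : ℤ, ∑ i, f i = Fintype.card ι + 2 * k := by
  have : ∀ i, ∃ k : ℤ, f i = 1 + 2 * k := by
    intro i
    rcases hf i with h | h
    · exact ⟨0, by simp [h]⟩
    · exact ⟨-1, by rw [h]; norm_num⟩
  choose k hk using this
  exact ⟨∑ i, k i, by simp [hk, Finset.sum_add_distrib, Finset.mul_sum]⟩

/-- Let `H'` be a saturated `OA(n, n-1, 2, 2)` with one fixed column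
deleted. The `n × ((n-2)(n-3)/2)` design `X` whose columns are exactly the two-column
interaction columns of `H'` satisfies `E(s²)(X) = n²(n-5)/((n-1)(n-3))` and is
`E(s²)`-optimal among all balanced `n × ((n-2)(n-3)/2)` two-level designs. -/
theorem Es2_optimal_interactions_only_delete_one (n : ℕ) (hn : 8 ≤ n) (h4 : 4 ∣ n)
    (H : Fin n → Fin (n - 1) → ℚ)
    (hpm : ∀ i j, H i j = 1 ∨ H i j = -1)
    (hbal : ∀ j, ∑ i : Fin n, H i j = 0)
    (horth : ∀ j k : Fin (n - 1), j ≠ k → ∑ i : Fin n, H i j * H i k = 0)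
    (cdel : Fin (n - 1))
    (X : Fin n → {p : {j : Fin (n - 1) // j ≠ cdel} × {j : Fin (n - 1) // j ≠ cdel} //
      p.1.1 < p.2.1} → ℚ)
    (hX : ∀ r p, X r p = H r p.1.1.1 * H r p.1.2.1) :
    Es2 X = (n : ℚ) ^ 2 * ((n : ℚ) - 5) / (((n : ℚ) - 1) * ((n : ℚ) - 3)) ∧
      ∀ Y : Fin n → Fin ((n - 2) * (n - 3) / 2) → ℚ,
        (∀ i j, Y i j = 1 ∨ Y i j = -1) → (∀ j, ∑ i : Fin n, Y i j = 0) →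
          Es2 X ≤ Es2 Y := by
  obtain ⟨q, rfl⟩ := h4
  have hq : 2 ≤ q := by omega
  have hqQ : (2 : ℚ) ≤ q := by exact_mod_cast hq
  have hH1 : ∀ r i, H r i * H r i = 1 := by
    intro r i; rcases hpm r i with h | h <;> simp [h]
  have hsub : ∀ f : Fin (4 * q - 1) → ℚ,
      ∑ j : {j : Fin (4 * q - 1) // j ≠ cdel}, f j.1 = ∑ j, f j - f cdel := by
    intro f
    have := Fintype.sum_subtype_add_sum_subtype (fun j => j ≠ cdel) f
    have h2 : ∑ i : {x : Fin (4 * q - 1) // ¬ x ≠ cdel}, f i = f cdel := by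
      rw [← Finset.sum_subtype (s := {cdel}) (p := fun x => ¬ x ≠ cdel) (by simp) f]
      simp
    linarith
  have hcast : ((4 * q - 1 : ℕ) : ℚ) = 4 * q - 1 := by
    rw [Nat.cast_sub (by omega)]; push_cast; ring
  have hcard : (Fintype.card {p : {j : Fin (4 * q - 1) // j ≠ cdel} ×
      {j : Fin (4 * q - 1) // j ≠ cdel} // p.1.1 < p.2.1} : ℚ) = (2 * q - 1) * (4 * q - 3) := by
    have h := pair_sum (α := {j : Fin (4 * q - 1) // j ≠ cdel}) (fun _ => 1)
    have h' := hsub (fun _ => 1)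
    simp only [mul_one, h'] at h
    simp only [Finset.sum_const, Finset.card_univ, nsmul_eq_mul, mul_one, Fintype.card_fin,
      hcast] at h
    have h3 : (Fintype.card {p : {j : Fin (4 * q - 1) // j ≠ cdel} ×
      {j : Fin (4 * q - 1) // j ≠ cdel} // p.1.1 < p.2.1} : ℚ) = 
      (Fintype.card {p : {j : Fin (4 * q - 1) // j ≠ cdel} ×
      {j : Fin (4 * q - 1) // j ≠ cdel} // p.1 < p.2} : ℚ) := rfl
    rw [h3]
    linarith
  have hcardY : (((4 * q - 2) * (4 * q - 3) / 2 : ℕ) : ℚ) = (2 * q - 1) * (4 * q - 3) := by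
    have : (4 * q - 2) * (4 * q - 3) / 2 = (2 * q - 1) * (4 * q - 3) := by
      have : (4 * q - 2) = 2 * (2 * q - 1) := by omega
      rw [this, mul_assoc, Nat.mul_div_cancel_left _ (by norm_num)]
    rw [this, Nat.cast_mul, Nat.cast_sub (by omega), Nat.cast_sub (by omega)]
    push_cast; ring
  have hXpm : ∀ r p, X r p = 1 ∨ X r p = -1 := by
    intro r p
    rw [hX]
    rcases hpm r p.1.1.1 with h | h <;> rcases hpm r p.1.2.1 with h' | h' <;> simp [h, h']
  have hXb : ∀ p, ∑ r, X r p = 0 := by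
    intro p
    simp only [hX]
    exact horth _ _ p.2.ne
  have hXG : ∀ r s, r ≠ s → (∑ p, X r p * X s p + (2 * q - 2)) ^ 2 = 1 := by
    intro r s hrs
    have h := pair_sum (α := {j : Fin (4 * q - 1) // j ≠ cdel}) (fun j => H r j.1 * H s j.1)
    rw [hsub (fun j => H r j * H s j), hsub (fun j => H r j * H s j * (H r j * H s j)),
      row_orth _ hn H hpm hbal horth r s hrs] at h
    have e : ∀ j, H r j * H s j * (H r j * H s j) = 1 := by
      intro j
      calc _ = (H r j * H r j) * (H s j * H s j) := by ring
        _ = 1 := by rw [hH1, hH1, one_mul]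
    simp only [e, Finset.sum_const, Finset.card_univ, nsmul_eq_mul, mul_one, Fintype.card_fin,
      hcast] at h
    have e3 : ∑ p, X r p * X s p = ∑ p : {p : {j : Fin (4 * q - 1) // j ≠ cdel} ×
      {j : Fin (4 * q - 1) // j ≠ cdel} // p.1 < p.2},
        H r p.1.1.1 * H s p.1.1.1 * (H r p.1.2.1 * H s p.1.2.1) := by
      refine Finset.sum_congr rfl fun p _ => ?_
      rw [hX, hX]; ring
    rw [e3]
    have e4 := e cdel
    generalize H r cdel * H s cdel = d at *
    have : ∑ p : {p : {j : Fin (4 * q - 1) // j ≠ cdel} ×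
      {j : Fin (4 * q - 1) // j ≠ cdel} // p.1 < p.2},
        H r p.1.1.1 * H s p.1.1.1 * (H r p.1.2.1 * H s p.1.2.1) + (2 * q - 2) = d := by
      linear_combination h / 2 + e4 / 2
    rw [this, sq, e4]
  have hT : ∑ r : Fin (4 * q), ∑ s : Fin (4 * q), (if r ≠ s then (1 : ℚ) else 0)
      = 4 * q * (4 * q - 1) := by
    rw [off_diag (fun _ _ => (1 : ℚ))]
    simp
    ring
  have hTX : (∑ r, ∑ s, if r ≠ s then (∑ p, X r p * X s p + (2 * (q : ℚ) - 2)) ^ 2 else (0 : ℚ))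
      = 4 * (q : ℚ) * (4 * (q : ℚ) - 1) := by
    rw [← hT]
    refine Finset.sum_congr rfl fun r _ => Finset.sum_congr rfl fun s _ => ?_
    split_ifs with h
    · exact hXG r s h
    · rfl
  have hm1 : (0 : ℚ) < (2 * q - 1) * (4 * q - 3) := by
    apply mul_pos <;> linarith
  have hm2 : (0 : ℚ) < (2 * q - 1) * (4 * q - 3) - 1 := by nlinarith
  have hXE : Es2 X = (4 * q * (4 * q - 1) - (4 * q) ^ 2 * (2 * q - 2) ^ 2
      + 4 * q * ((2 * q - 1) * (4 * q - 3) + (2 * q - 2)) ^ 2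
      - (4 * q) ^ 2 * ((2 * q - 1) * (4 * q - 3)))
      / ((2 * q - 1) * (4 * q - 3) * ((2 * q - 1) * (4 * q - 3) - 1)) := by
    unfold Es2
    rw [key X hXpm hXb (2 * q - 2), hTX, hcard]
    push_cast
    rfl
  constructor
  · rw [hXE]
    push_cast
    rw [div_eq_div_iff (mul_pos hm1 hm2).ne' (by apply ne_of_gt; apply mul_pos <;> linarith)]
    ring
  · intro Y hY hYb
    rw [hXE]
    unfold Es2
    rw [key Y hY hYb (2 * q - 2), Fintype.card_fin, hcardY]
    push_cast
    apply div_le_div_of_nonneg_right _ (mul_pos hm1 hm2).le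
    gcongr
    rw [← hT]
    refine Finset.sum_le_sum fun r _ => Finset.sum_le_sum fun s _ => ?_
    split_ifs with h
    · obtain ⟨k, hk⟩ := parity (fun i => Y r i * Y s i) (by
        intro i
        rcases hY r i with h | h <;> rcases hY s i with h' | h' <;> simp [h, h'])
      rw [Fintype.card_fin, hcardY] at hk
      rw [hk]
      have e : ((2 * q - 1) * (4 * q - 3) + 2 * k + (2 * q - 2) : ℚ)
          = ((2 * (4 * q ^ 2 - 4 * q + k) + 1 : ℤ) : ℚ) := by
        push_cast; ring
      rw [e]
      generalize (4 * (q : ℤ) ^ 2 - 4 * q + k) = t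
      have : (1 : ℤ) ≤ (2 * t + 1) ^ 2 := by
        have h0 : (2 * t + 1) ≠ 0 := by omega
        have := pow_pos (abs_pos.2 h0) 2
        rw [sq_abs] at this
        exact this
      exact_mod_cast this
    · exact le_rfl
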